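/- arXiv:1706.00645 — 4 statements merged into one kernel-verified Lean document; each statement's English description precedes it below -/
import Mathlib

section
/- Let H be a complex Hilbert space, M : H → H a bounded linear operator, and A : dom(A) ⊆ H → H a densely defined skew-selfadjoint operator (A* = −A). Assume there exists c > 0 such that Re⟨M x, x⟩ ≥ c‖x‖² for all x ∈ H. Then the operator M + A, with domain dom(A), is a bijection from dom(A) onto H, its inverse is a bounded operator on H, and ‖(M + A)⁻¹‖ ≤ 1/c. -/
/-!
A lower bound `c‖x‖² ≤ Re⟪T x, x⟫`, `c > 0`, makes a closed operator `T` injective with closed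
range, and `(range T)ᗮ = ker T†`, so `T` is surjective as soon as `T†` satisfies such a bound. For
`T = M + A` with `M` bounded, `T† = M† + A†`, and both bounds are inherited from `M` when `A` and
`A†` have nonnegative real part; for skew-selfadjoint `A` these real parts vanish.
-/

open LinearMap (range)
open RCLike (re)
open scoped InnerProductSpace LinearPMap

section Module

variable {R E F : Type*} [Ring R] [AddCommGroup E] [Module R E] [AddCommGroup F] [Module R F]

theorem mem_graph_vadd_iff (M : E →ₗ[R] F) (A : E →ₗ.[R] F) {x : E} {y : F} :
    (x, y) ∈ (M +ᵥ A).graph ↔ (x, y - M x) ∈ A.graph := by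
  simp only [LinearPMap.mem_graph_iff, LinearPMap.vadd_apply]
  refine exists_congr fun z ↦ and_congr_right fun hz ↦ ?_
  rw [← hz, eq_sub_iff_add_eq']

end Module

section Topology

variable {R E F : Type*} [CommRing R] [AddCommGroup E] [Module R E] [TopologicalSpace E]
  [AddCommGroup F] [Module R F] [TopologicalSpace F]

theorem isClosed_linearPMap_vadd [ContinuousSub F] (M : E →L[R] F) {A : E →ₗ.[R] F}
    (hA : A.IsClosed) :
    ((M : E →ₗ[R] F) +ᵥ A).IsClosed := by
  have hgraph : (((M : E →ₗ[R] F) +ᵥ A).graph : Set (E × F)) =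
      (fun p : E × F ↦ (p.1, p.2 - M p.1)) ⁻¹' A.graph :=
    Set.ext fun _ ↦ mem_graph_vadd_iff (M : E →ₗ[R] F) A
  rw [LinearPMap.IsClosed, hgraph]
  exact IsClosed.preimage (by fun_prop) hA

theorem isClosed_linearPMap_neg [ContinuousNeg F] {A : E →ₗ.[R] F} (hA : A.IsClosed) :
    (-A).IsClosed := by
  have hgraph : ((-A).graph : Set (E × F)) = (fun p : E × F ↦ (p.1, -p.2)) ⁻¹' A.graph := by
    ext ⟨x, y⟩
    simp only [SetLike.mem_coe, Set.mem_preimage, LinearPMap.mem_graph_iff, LinearPMap.neg_apply,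
      LinearPMap.neg_domain, neg_eq_iff_eq_neg]
  rw [LinearPMap.IsClosed, hgraph]
  exact IsClosed.preimage (by fun_prop) hA

end Topology

section NormedSpace

variable {𝕜 E F : Type*} [NormedField 𝕜] [NormedAddCommGroup E] [NormedSpace 𝕜 E]
  [NormedAddCommGroup F] [NormedSpace 𝕜 F]

theorem injective_of_bounded_below {T : E →ₗ.[𝕜] F} {c : ℝ} (hc : 0 < c)
    (hT : ∀ x : T.domain, c * ‖(x : E)‖ ≤ ‖T x‖) : Function.Injective T := by
  refine (injective_iff_map_eq_zero T.toFun).mpr fun x hx ↦ ?_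
  have hle : c * ‖(x : E)‖ ≤ 0 := (hT x).trans_eq (norm_eq_zero.mpr hx)
  exact Subtype.ext (norm_le_zero_iff.mp (nonpos_of_mul_nonpos_right hle hc))

theorem isClosed_range_of_isClosed_of_bounded_below [CompleteSpace E] [CompleteSpace F]
    {T : E →ₗ.[𝕜] F} (hT_closed : T.IsClosed) {c : ℝ} (hc : 0 < c)
    (hT : ∀ x : T.domain, c * ‖(x : E)‖ ≤ ‖T x‖) : IsClosed (range T.toFun : Set F) := by
  let snd : T.graph →ₗ[𝕜] F := (LinearMap.snd 𝕜 E F).domRestrict T.graph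
  have hbound : ∀ p : T.graph, ‖p‖ ≤ (max c⁻¹ 1).toNNReal * ‖snd p‖ := by
    rintro ⟨⟨x, y⟩, hxy⟩
    obtain ⟨x, rfl, rfl⟩ := T.mem_graph_iff.mp hxy
    rw [Real.coe_toNNReal _ (by positivity)]
    refine max_le ?_ (le_mul_of_one_le_left (norm_nonneg _) (le_max_right _ _))
    calc ‖(x : E)‖ ≤ c⁻¹ * ‖T x‖ := (le_inv_mul_iff₀ hc).mpr (hT x)
      _ ≤ max c⁻¹ 1 * ‖T x‖ := by gcongr; exact le_max_left _ _
  have : CompleteSpace T.graph := hT_closed.completeSpace_coe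
  have hclosed : IsClosed (Set.range snd) :=
    (AddMonoidHomClass.antilipschitz_of_bound snd hbound).isClosed_range
      (uniformContinuous_snd.comp uniformContinuous_subtype_val)
  rwa [← LinearMap.coe_range, LinearMap.range_domRestrict, T.graph_map_snd_eq_range] at hclosed

end NormedSpace

section NontriviallyNormedField

variable {𝕜 E F : Type*} [NontriviallyNormedField 𝕜] [NormedAddCommGroup E] [NormedSpace 𝕜 E]
  [NormedAddCommGroup F] [NormedSpace 𝕜 F]

theorem exists_bounded_inverse_of_bounded_below {T : E →ₗ.[𝕜] F} {c : ℝ} (hc : 0 < c)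
    (hT : ∀ x : T.domain, c * ‖(x : E)‖ ≤ ‖T x‖) (hT_surj : Function.Surjective T) :
    ∃ B : F →L[𝕜] E, ‖B‖ ≤ c⁻¹ ∧ ∀ x : T.domain, B (T x) = x := by
  let e : T.domain ≃ₗ[𝕜] F :=
    LinearEquiv.ofBijective T.toFun ⟨injective_of_bounded_below hc hT, hT_surj⟩
  have he : ∀ y, ‖(e.symm y : E)‖ ≤ c⁻¹ * ‖y‖ := fun y ↦
    (le_inv_mul_iff₀ hc).mpr ((hT (e.symm y)).trans_eq (congrArg norm (e.apply_symm_apply y)))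
  exact ⟨(T.domain.subtype ∘ₗ e.symm.toLinearMap).mkContinuous c⁻¹ he,
    LinearMap.mkContinuous_norm_le _ (by positivity) he,
    fun x ↦ congrArg Subtype.val (e.symm_apply_apply x)⟩

end NontriviallyNormedField

section InnerProductSpace

variable {𝕜 E F : Type*} [RCLike 𝕜] [NormedAddCommGroup E] [InnerProductSpace 𝕜 E]
  [NormedAddCommGroup F] [InnerProductSpace 𝕜 F]

section Adjoint

variable [CompleteSpace E]

theorem mem_graph_adjoint_iff {T : E →ₗ.[𝕜] F} (hT : Dense (T.domain : Set E)) {y : F} {w : E} :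
    (y, w) ∈ T†.graph ↔ ∀ x : T.domain, ⟪T x, y⟫_𝕜 = ⟪(x : E), w⟫_𝕜 := by
  rw [LinearPMap.adjoint_graph_eq_graph_adjoint hT, Submodule.mem_adjoint_iff]
  simp only [sub_eq_zero]
  refine ⟨fun h x ↦ h x (T x) (T.mem_graph x), fun h a b hab ↦ ?_⟩
  obtain ⟨x, rfl, rfl⟩ := T.mem_graph_iff.mp hab
  exact h x

theorem mem_orthogonal_range_iff_mem_graph_adjoint {T : E →ₗ.[𝕜] F}
    (hT : Dense (T.domain : Set E)) {y : F} : y ∈ (range T.toFun)ᗮ ↔ (y, 0) ∈ T†.graph := by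
  simp only [mem_graph_adjoint_iff hT, Submodule.mem_orthogonal, LinearMap.mem_range,
    LinearPMap.toFun_eq_coe, forall_exists_index, forall_apply_eq_imp_iff, inner_zero_right]

theorem surjective_of_isClosed_range_of_injective_adjoint [CompleteSpace F] {T : E →ₗ.[𝕜] F}
    (hT : Dense (T.domain : Set E)) (hT_range : IsClosed (range T.toFun : Set F))
    (hT_adj : Function.Injective T†) : Function.Surjective T := by
  have : CompleteSpace (range T.toFun) := hT_range.completeSpace_coe
  refine LinearMap.range_eq_top.mp (Submodule.orthogonal_eq_bot_iff.mp ?_)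
  refine (Submodule.eq_bot_iff _).mpr fun y hy ↦ ?_
  obtain ⟨z, rfl, hz⟩ :=
    T†.mem_graph_iff.mp ((mem_orthogonal_range_iff_mem_graph_adjoint hT).mp hy)
  exact congrArg Subtype.val (hT_adj (hz.trans T†.map_zero.symm))

theorem adjoint_vadd [CompleteSpace F] (M : E →L[𝕜] F) {A : E →ₗ.[𝕜] F}
    (hA : Dense (A.domain : Set E)) :
    ((M : E →ₗ[𝕜] F) +ᵥ A)† = (M.adjoint : F →ₗ[𝕜] E) +ᵥ A† := by
  have hMA : Dense (((M : E →ₗ[𝕜] F) +ᵥ A).domain : Set E) := hA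
  refine LinearPMap.eq_of_eq_graph (Submodule.ext fun ⟨y, w⟩ ↦ ?_)
  rw [mem_graph_vadd_iff, mem_graph_adjoint_iff hMA, mem_graph_adjoint_iff hA]
  refine forall_congr' fun x ↦ ?_
  rw [LinearPMap.vadd_apply, inner_add_left, inner_sub_right, eq_sub_iff_add_eq',
    ContinuousLinearMap.coe_coe, ContinuousLinearMap.coe_coe,
    ContinuousLinearMap.adjoint_inner_right]

end Adjoint

/-- The real part of the operator `T` is at least `c` on its domain. For `c = 0` this says that
`T` is accretive, for `c > 0` that it is strictly accretive (coercive). -/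
def IsAccretiveWith (c : ℝ) (T : E →ₗ.[𝕜] E) : Prop :=
  ∀ x : T.domain, c * ‖(x : E)‖ ^ 2 ≤ re ⟪T x, (x : E)⟫_𝕜

namespace IsAccretiveWith

theorem bounded_below {c : ℝ} {T : E →ₗ.[𝕜] E} (hT : IsAccretiveWith c T) (x : T.domain) :
    c * ‖(x : E)‖ ≤ ‖T x‖ := by
  rcases (norm_nonneg (x : E)).eq_or_lt with hx | hx
  · simp only [← hx, mul_zero, norm_nonneg]
  · refine le_of_mul_le_mul_right ?_ hx
    calc c * ‖(x : E)‖ * ‖(x : E)‖ = c * ‖(x : E)‖ ^ 2 := by ring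
      _ ≤ re ⟪T x, (x : E)⟫_𝕜 := hT x
      _ ≤ ‖T x‖ * ‖(x : E)‖ := re_inner_le_norm _ _

theorem vadd {c d : ℝ} {M : E →ₗ[𝕜] E} (hM : ∀ x, c * ‖x‖ ^ 2 ≤ re ⟪M x, x⟫_𝕜) {A : E →ₗ.[𝕜] E}
    (hA : IsAccretiveWith d A) : IsAccretiveWith (c + d) (M +ᵥ A) := fun x ↦ by
  rw [LinearPMap.vadd_apply, inner_add_left, map_add, add_mul]
  exact add_le_add (hM x) (hA x)

theorem exists_bounded_inverse [CompleteSpace E] {c : ℝ} (hc : 0 < c) {T : E →ₗ.[𝕜] E}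
    (hT_dense : Dense (T.domain : Set E)) (hT_closed : T.IsClosed)
    (hT : IsAccretiveWith c T) (hT_adj : IsAccretiveWith c T†) :
    ∃ B : E →L[𝕜] E, ‖B‖ ≤ c⁻¹ ∧ (∀ x : T.domain, B (T x) = x) ∧ Function.Surjective T := by
  have hT_surj : Function.Surjective T :=
    surjective_of_isClosed_range_of_injective_adjoint hT_dense
      (isClosed_range_of_isClosed_of_bounded_below hT_closed hc hT.bounded_below)
      (injective_of_bounded_below hc hT_adj.bounded_below)
  obtain ⟨B, hB, hBT⟩ := exists_bounded_inverse_of_bounded_below hc hT.bounded_below hT_surj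
  exact ⟨B, hB, hBT, hT_surj⟩

end IsAccretiveWith

section SkewAdjoint

variable [CompleteSpace E] {A : E →ₗ.[𝕜] E} (hA_dense : Dense (A.domain : Set E))
  (hA_skew : A† = -A)

include hA_dense hA_skew

theorem isClosed_of_adjoint_eq_neg : A.IsClosed := by
  rw [← neg_neg A, ← hA_skew]
  exact isClosed_linearPMap_neg (LinearPMap.adjoint_isClosed hA_dense)

theorem re_inner_self_eq_zero_of_adjoint_eq_neg (x : A.domain) : re ⟪A x, (x : E)⟫_𝕜 = 0 := by
  have hformal : (-A).IsFormalAdjoint A := hA_skew ▸ LinearPMap.adjoint_isFormalAdjoint hA_dense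
  refine neg_eq_self.mp ?_
  calc -re ⟪A x, (x : E)⟫_𝕜 = re ⟪(-A) x, (x : E)⟫_𝕜 := by
        rw [LinearPMap.neg_apply, inner_neg_left, map_neg]
    _ = re ⟪(x : E), A x⟫_𝕜 := congrArg re (hformal x x)
    _ = re ⟪A x, (x : E)⟫_𝕜 := inner_re_symm _ _

theorem isAccretiveWith_zero_of_adjoint_eq_neg : IsAccretiveWith 0 A := fun x ↦ by
  rw [zero_mul, re_inner_self_eq_zero_of_adjoint_eq_neg hA_dense hA_skew]

theorem isAccretiveWith_zero_adjoint_of_adjoint_eq_neg : IsAccretiveWith 0 A† := by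
  rw [hA_skew]
  intro x
  rw [LinearPMap.neg_apply, inner_neg_left, map_neg,
    re_inner_self_eq_zero_of_adjoint_eq_neg hA_dense hA_skew, neg_zero, zero_mul]

end SkewAdjoint

theorem statement0_general [CompleteSpace E] (M : E →L[𝕜] E) (A : E →ₗ.[𝕜] E)
    (hA_dense : Dense (A.domain : Set E)) (hA_closed : A.IsClosed)
    (hA : IsAccretiveWith 0 A) (hA_adj : IsAccretiveWith 0 A†)
    (c : ℝ) (hc : 0 < c) (hM : ∀ x : E, c * ‖x‖ ^ 2 ≤ re ⟪M x, x⟫_𝕜) :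
    ∃ B : E →L[𝕜] E, ‖B‖ ≤ 1 / c ∧
      (∀ x : A.domain, B (M x + A x) = x) ∧
      (∀ y : E, ∃ x : A.domain, M (x : E) + A x = y) := by
  have hM_adj : ∀ x, c * ‖x‖ ^ 2 ≤ re ⟪M.adjoint x, x⟫_𝕜 := fun x ↦ by
    rw [ContinuousLinearMap.adjoint_inner_left, inner_re_symm]
    exact hM x
  have hT : IsAccretiveWith c ((M : E →ₗ[𝕜] E) +ᵥ A) := add_zero c ▸ hA.vadd hM
  have hT_adj : IsAccretiveWith c ((M : E →ₗ[𝕜] E) +ᵥ A)† := by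
    rw [adjoint_vadd M hA_dense]
    exact add_zero c ▸ hA_adj.vadd hM_adj
  rw [one_div]
  exact hT.exists_bounded_inverse (T := (M : E →ₗ[𝕜] E) +ᵥ A) hc hA_dense
    (isClosed_linearPMap_vadd M hA_closed) hT_adj

end InnerProductSpace

/-- Let `H` be a complex Hilbert space, `M : H → H` a bounded linear operator,
and `A` a densely defined skew-selfadjoint operator (`A† = -A`). If `Re⟪M x, x⟫ ≥ c‖x‖²` for some
`c > 0`, then `M + A` (with domain `dom A`) is a bijection from `dom A` onto `H` whose inverse is
a bounded operator of norm at most `1/c`. -/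
theorem statement0
    {H : Type*} [NormedAddCommGroup H] [InnerProductSpace ℂ H] [CompleteSpace H]
    (M : H →L[ℂ] H)
    (A : H →ₗ.[ℂ] H) (hA_dense : Dense (A.domain : Set H))
    (hA_skew : A.adjoint = -A)
    (c : ℝ) (hc : 0 < c)
    (hM : ∀ x : H, c * ‖x‖ ^ 2 ≤ (inner ℂ (M x) x : ℂ).re) :
    ∃ B : H →L[ℂ] H, ‖B‖ ≤ 1 / c ∧
      (∀ x : A.domain, B (M x + A x) = x) ∧
      (∀ y : H, ∃ x : A.domain, M (x : H) + A x = y) :=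
  statement0_general M A hA_dense (isClosed_of_adjoint_eq_neg hA_dense hA_skew)
    (isAccretiveWith_zero_of_adjoint_eq_neg hA_dense hA_skew)
    (isAccretiveWith_zero_adjoint_of_adjoint_eq_neg hA_dense hA_skew) c hc hM
end

section
/- Let H be a complex Hilbert space and A : dom(A) ⊆ H → H a densely defined skew-selfadjoint operator (A* = −A). Let U ⊆ H be a closed subspace with orthogonal projection π_U, set V := U^⊥ with π_V = 1 − π_U, and let ι_U : U → H, ι_V : V → H be the inclusion maps. Assume π_U A ⊆ A π_U and that A π_V is bounded (i.e. V ⊆ dom(A) and the restriction of A to V is a bounded operator). Then the compression ι_U* A ι_U, with domain dom(A) ∩ U, is skew-selfadjoint as an operator in U, and the bounded operator ι_V* A ι_V is skew-selfadjoint in V. -/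
open scoped InnerProductSpace

variable {H : Type*} [NormedAddCommGroup H] [InnerProductSpace ℂ H] [CompleteSpace H]

/-- The compression `ι_U* A ι_U` of an operator `A : dom(A) ⊆ H → H` to a closed subspace
`U ⊆ H`, with domain `dom(A) ∩ U`, given by `u ↦ ι_U* (A u) = orthogonalProjection U (A u)`. -/
noncomputable def LinearPMap.compress (A : H →ₗ.[ℂ] H) (U : Submodule ℂ H) [CompleteSpace U] :
    U →ₗ.[ℂ] U where
  domain := A.domain.comap U.subtype
  toFun := (Submodule.orthogonalProjectionOnto U).toLinearMap.comp
    (A.toFun.comp (U.subtype.restrict (q := A.domain) fun _ hx => hx))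

/-!
Let `U` reduce `A`, that is `π_U A ⊆ A π_U`; then so does `Uᗮ`, since `π_{Uᗮ} = 1 - π_U`. For
`x ∈ dom A` and `y ∈ U` we have `⟪y, A x⟫ = ⟪y, π_U A x⟫ = ⟪y, A (π_U x)⟫`, so the functional
`x ↦ ⟪y, A x⟫` is bounded on `dom A` as soon as it is bounded on `dom A ∩ U`. Hence compression
to `U` commutes with taking adjoints; as it also commutes with negation, `A† = -A` passes to it.
-/

section Reduces

variable {𝕜 E : Type*} [RCLike 𝕜] [NormedAddCommGroup E] [InnerProductSpace 𝕜 E]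
  {A : E →ₗ.[𝕜] E} {U : Submodule 𝕜 E} [U.HasOrthogonalProjection]

/-- The subspace `U` reduces the unbounded operator `A`: `π_U A ⊆ A π_U`, where `π_U` is the
orthogonal projection onto `U`, regarded as an operator on the whole space. -/
def Reduces (U : Submodule 𝕜 E) [U.HasOrthogonalProjection] (A : E →ₗ.[𝕜] E) : Prop :=
  ∀ x : A.domain, ∃ hx : U.starProjection (x : E) ∈ A.domain,
    U.starProjection (A x) = A ⟨U.starProjection (x : E), hx⟩

theorem Reduces.orthogonal (hU : Reduces U A) : Reduces Uᗮ A := by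
  intro x
  obtain ⟨hx, hAx⟩ := hU x
  simp only [Submodule.starProjection_orthogonal_val]
  exact ⟨A.domain.sub_mem x.2 hx, by rw [hAx, ← A.map_sub]; rfl⟩

theorem dense_comap_subtype_of_starProjection_mem {D : Submodule 𝕜 E} (hD : Dense (D : Set E))
    (hU : ∀ x ∈ D, U.starProjection x ∈ D) : Dense (D.comap U.subtype : Set U) := by
  have hsurj : Function.Surjective U.orthogonalProjectionOnto := fun u =>
    ⟨u, U.orthogonalProjectionOnto_mem_subspace_eq_self u⟩
  refine (hsurj.denseRange.dense_image U.orthogonalProjectionOnto.continuous hD).mono ?_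
  rintro _ ⟨x, hx, rfl⟩
  exact hU x hx

end Reduces

section Compression

variable {E : Type*} [NormedAddCommGroup E] [InnerProductSpace ℂ E]
  {A B : E →ₗ.[ℂ] E} {U : Submodule ℂ E} [CompleteSpace U]

theorem compress_apply (x : (A.compress U).domain) :
    A.compress U x = U.orthogonalProjectionOnto (A ⟨(x : U), x.2⟩) :=
  rfl

theorem compress_neg (A : E →ₗ.[ℂ] E) (U : Submodule ℂ E) [CompleteSpace U] :
    (-A).compress U = -A.compress U := by
  refine LinearPMap.ext rfl fun x _ _ => ?_
  simp only [compress_apply, LinearPMap.neg_apply, map_neg]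

theorem inner_compress_right (y : U) (x : (A.compress U).domain) :
    ⟪y, A.compress U x⟫_ℂ = ⟪(y : E), A ⟨(x : U), x.2⟩⟫_ℂ := by
  rw [compress_apply, Submodule.inner_orthogonalProjectionOnto_eq_of_mem_left]

theorem isFormalAdjoint_compress (h : A.IsFormalAdjoint B) :
    (A.compress U).IsFormalAdjoint (B.compress U) := by
  intro x y
  rw [inner_compress_right, compress_apply,
    Submodule.inner_orthogonalProjectionOnto_eq_of_mem_right]
  exact h ⟨(x : U), x.2⟩ ⟨(y : U), y.2⟩

namespace Reduces

theorem dense_domain_compress (hU : Reduces U A) (hA : Dense (A.domain : Set E)) :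
    Dense ((A.compress U).domain : Set U) :=
  dense_comap_subtype_of_starProjection_mem hA fun x hx => (hU ⟨x, hx⟩).1

theorem inner_apply_eq_inner_compress (hU : Reduces U A) (y : U) (x : A.domain) :
    ⟪(y : E), A x⟫_ℂ =
      ⟪y, A.compress U ⟨U.orthogonalProjectionOnto (x : E), (hU x).1⟩⟫_ℂ := by
  obtain ⟨hx, hAx⟩ := hU x
  calc ⟪(y : E), A x⟫_ℂ = ⟪(y : E), U.starProjection (A x)⟫_ℂ := by
        rw [← Submodule.inner_starProjection_left_eq_right,
          Submodule.starProjection_eq_self_iff.mpr y.2]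
    _ = ⟪(y : E), A ⟨U.starProjection (x : E), hx⟩⟫_ℂ := by rw [hAx]
    _ = _ := (inner_compress_right y ⟨U.orthogonalProjectionOnto (x : E), hx⟩).symm

variable [CompleteSpace E]

theorem coe_mem_adjoint_domain (hU : Reduces U A) (hA : Dense (A.domain : Set E)) {y : U}
    (hy : y ∈ (A.compress U).adjoint.domain) : (y : E) ∈ A.adjoint.domain := by
  refine LinearPMap.mem_adjoint_domain_of_exists _
    ⟨((A.compress U).adjoint ⟨y, hy⟩ : U), fun x => ?_⟩
  rw [hU.inner_apply_eq_inner_compress,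
    ← LinearPMap.adjoint_isFormalAdjoint (hU.dense_domain_compress hA) ⟨y, hy⟩,
    Submodule.inner_orthogonalProjectionOnto_eq_of_mem_left]

theorem adjoint_compress (hU : Reduces U A) (hA : Dense (A.domain : Set E)) :
    (A.compress U).adjoint = A.adjoint.compress U := by
  have hle : A.adjoint.compress U ≤ (A.compress U).adjoint :=
    (isFormalAdjoint_compress (LinearPMap.adjoint_isFormalAdjoint hA).symm).le_adjoint
      (hU.dense_domain_compress hA)
  exact (LinearPMap.eq_of_le_of_domain_eq hle
    (le_antisymm hle.1 fun _ hy => hU.coe_mem_adjoint_domain hA hy)).symm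

theorem adjoint_compress_eq_neg (hU : Reduces U A) (hA : Dense (A.domain : Set E))
    (hskew : A.adjoint = -A) : (A.compress U).adjoint = -A.compress U := by
  rw [hU.adjoint_compress hA, hskew, compress_neg]

end Reduces

end Compression

theorem statement2_general {A : H →ₗ.[ℂ] H} (hA_dense : Dense (A.domain : Set H))
    (hA_skew : A.adjoint = -A) {U : Submodule ℂ H} [CompleteSpace U] (hU : Reduces U A) :
    (A.compress U).adjoint = -(A.compress U) ∧
    (A.compress Uᗮ).adjoint = -(A.compress Uᗮ) :=
  ⟨hU.adjoint_compress_eq_neg hA_dense hA_skew,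
    hU.orthogonal.adjoint_compress_eq_neg hA_dense hA_skew⟩

/-- Let `A` be a densely defined skew-selfadjoint operator (`A† = -A`) on a
complex Hilbert space `H`, `U ⊆ H` a closed subspace, `V := Uᗮ`.  Assume `π_U A ⊆ A π_U` and
that `A π_V` is bounded (`V ⊆ dom A` and `A` is bounded on `V`).  Then the compressions
`ι_U* A ι_U` (with domain `dom(A) ∩ U`) and `ι_V* A ι_V` are skew-selfadjoint in `U` resp. `V`. -/
theorem statement2
    (A : H →ₗ.[ℂ] H) (hA_dense : Dense (A.domain : Set H))
    (hA_skew : A.adjoint = -A)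
    (U : Submodule ℂ H) [CompleteSpace U]
    (hU : ∀ x : A.domain,
      ∃ hx : ((Submodule.orthogonalProjectionOnto U (x : H) : H)) ∈ A.domain,
        (Submodule.orthogonalProjectionOnto U (A x) : H) = A ⟨(Submodule.orthogonalProjectionOnto U (x : H) : H), hx⟩)
    (hV_sub : Uᗮ ≤ A.domain)
    (hV_bdd : ∃ C : ℝ, ∀ x : A.domain, (x : H) ∈ Uᗮ → ‖A x‖ ≤ C * ‖(x : H)‖) :
    (A.compress U).adjoint = -(A.compress U) ∧
    (A.compress Uᗮ).adjoint = -(A.compress Uᗮ) :=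
  statement2_general hA_dense hA_skew hU
end

section
/- Assume Hypothesis (H). Let ε₀ := 1/(2 C_R ‖M‖). Then for every ε ∈ (0, ε₀), the operator B_{ε,R} := ι_R* M ι_R + ε⁻¹ ι_R* A ι_R, with domain dom(A) ∩ R, is a bijection from its domain onto R with bounded inverse, and ‖B_{ε,R}⁻¹‖ ≤ 2 C_R ε. -/
/-!
Let `A_R` and `M_R` be the compressions of `A` and `M` to `R`. Then
`M_R + ε⁻¹ A_R = ε⁻¹ A_R (1 + ε A_R⁻¹ M_R)`, where `‖ε A_R⁻¹ M_R‖ ≤ ε C_R ‖M‖ ≤ 1 / 2`. The second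
factor is inverted by a Neumann series of norm at most `(1 - 1 / 2)⁻¹ = 2`, and `ε⁻¹ A_R` has the
inverse `ε A_R⁻¹`, of norm at most `C_R ε`.
-/

section BoundedInverse

variable {𝕜 E F : Type*} [NontriviallyNormedField 𝕜] [NormedAddCommGroup E] [NormedSpace 𝕜 E]
  [NormedAddCommGroup F] [NormedSpace 𝕜 F] {T : E →ₗ.[𝕜] F} {J : F →L[𝕜] E}

/-- `J` is the everywhere defined bounded inverse of the partially defined operator `T`: the
operator `T` is a bijection from its domain onto `F`, and `J` maps `T x` back to `x`. Injectivity
of `T` is encoded by the existence of the left inverse `J`. -/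
structure IsBoundedInverse (T : E →ₗ.[𝕜] F) (J : F →L[𝕜] E) : Prop where
  left_inv (x : T.domain) : J (T x) = x
  surjective : Function.Surjective T

namespace IsBoundedInverse

theorem inv_smul (hJ : IsBoundedInverse T J) {a : 𝕜} (ha : a ≠ 0) :
    IsBoundedInverse (a⁻¹ • T) (a • J) where
  left_inv x := by
    rw [LinearPMap.smul_apply, smul_apply, map_smul, smul_inv_smul₀ ha]
    exact hJ.left_inv x
  surjective y := by
    obtain ⟨x, hx⟩ := hJ.surjective (a • y)
    exact ⟨x, by rw [LinearPMap.smul_apply, hx, inv_smul_smul₀ ha]⟩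

theorem vadd (hJ : IsBoundedInverse T J) {B : E →L[𝕜] F} {U : (E →L[𝕜] E)ˣ}
    (hU : (U : E →L[𝕜] E) = 1 + J ∘L B) :
    IsBoundedInverse ((B : E →ₗ[𝕜] F) +ᵥ T) ((↑U⁻¹ : E →L[𝕜] E) ∘L J) where
  left_inv x := by
    have hJx : J (B x + T x) = (U : E →L[𝕜] E) x := by
      rw [map_add, hJ.left_inv, hU, add_comm]
      rfl
    calc (↑U⁻¹ : E →L[𝕜] E) (J (B x + T x))
        = (↑U⁻¹ * ↑U : E →L[𝕜] E) x := by rw [hJx]; rfl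
      _ = x := by rw [U.inv_mul]; rfl
  surjective y := by
    set z : E := (↑U⁻¹ : E →L[𝕜] E) (J y)
    have hz : z + J (B z) = J y :=
      calc z + J (B z) = (↑U * ↑U⁻¹ : E →L[𝕜] E) (J y) := by rw [hU]; rfl
        _ = J y := by rw [U.mul_inv]; rfl
    obtain ⟨x, hx⟩ := hJ.surjective (y - B z)
    have hxz : (x : E) = z := by
      rw [← hJ.left_inv x, hx, map_sub, ← hz, add_sub_cancel_right]
    refine ⟨x, ?_⟩
    calc B x + T x = B z + (y - B z) := by rw [hx, hxz]
      _ = y := add_sub_cancel _ _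

theorem exists_vadd_of_norm_comp_lt_one [CompleteSpace E] (hJ : IsBoundedInverse T J)
    (B : E →L[𝕜] F) (hB : ‖J ∘L B‖ < 1) :
    ∃ K : F →L[𝕜] E, ‖K‖ ≤ (1 - ‖J ∘L B‖)⁻¹ * ‖J‖ ∧
      IsBoundedInverse ((B : E →ₗ[𝕜] F) +ᵥ T) K := by
  have hS : ‖-(J ∘L B)‖ < 1 := by rwa [norm_neg]
  let U := Units.oneSub (-(J ∘L B)) hS
  have hU : ‖(↑U⁻¹ : E →L[𝕜] E)‖ ≤ (1 - ‖J ∘L B‖)⁻¹ :=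
    calc ‖(↑U⁻¹ : E →L[𝕜] E)‖ ≤ ‖(1 : E →L[𝕜] E)‖ - 1 + (1 - ‖-(J ∘L B)‖)⁻¹ :=
          tsum_geometric_le_of_norm_lt_one _ hS
      _ ≤ (1 - ‖J ∘L B‖)⁻¹ := by
          have h_one : ‖(1 : E →L[𝕜] E)‖ ≤ 1 := ContinuousLinearMap.norm_id_le
          rw [norm_neg]
          linarith
  refine ⟨(↑U⁻¹ : E →L[𝕜] E) ∘L J, ?_, hJ.vadd (sub_neg_eq_add _ _)⟩
  exact (ContinuousLinearMap.opNorm_comp_le _ _).trans (by gcongr)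

end IsBoundedInverse

end BoundedInverse

section Compression

variable {𝕜 H : Type*} [RCLike 𝕜] [NormedAddCommGroup H] [InnerProductSpace 𝕜 H]

/-- The compression `ι_R* T ι_R` of a partially defined operator `T` to a subspace `R`, with domain
`dom T ∩ R` regarded as a subspace of `R`; the adjoint `ι_R*` of the inclusion is the orthogonal
projection as a map onto `R`. -/
noncomputable def compression (T : H →ₗ.[𝕜] H) (R : Submodule 𝕜 H) [R.HasOrthogonalProjection] :
    R →ₗ.[𝕜] R where
  domain := T.domain.comap R.subtype
  toFun := R.orthogonalProjectionOnto.toLinearMap ∘ₗ T.toFun ∘ₗ R.subtype.submoduleComap T.domain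

theorem isBoundedInverse_compression_iff {T : H →ₗ.[𝕜] H} {R : Submodule 𝕜 H}
    [R.HasOrthogonalProjection] {J : R →L[𝕜] R} :
    IsBoundedInverse (compression T R) J ↔
      (∀ (x : T.domain) (hx : (x : H) ∈ R), J (R.orthogonalProjectionOnto (T x)) = ⟨x, hx⟩) ∧
      ∀ y : R, ∃ (x : T.domain) (_ : (x : H) ∈ R), R.orthogonalProjectionOnto (T x) = y := by
  constructor
  · rintro ⟨hJ, hT⟩
    refine ⟨fun x hx ↦ hJ ⟨⟨x, hx⟩, x.2⟩, fun y ↦ ?_⟩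
    obtain ⟨x, hxy⟩ := hT y
    exact ⟨⟨x, x.2⟩, x.1.2, hxy⟩
  · rintro ⟨hJ, hT⟩
    refine ⟨fun x ↦ hJ ⟨x, x.2⟩ x.1.2, fun y ↦ ?_⟩
    obtain ⟨x, hx, hxy⟩ := hT y
    exact ⟨⟨⟨x, hx⟩, x.2⟩, hxy⟩

theorem compression_smul (a : 𝕜) (T : H →ₗ.[𝕜] H) (R : Submodule 𝕜 H)
    [R.HasOrthogonalProjection] : compression (a • T) R = a • compression T R :=
  LinearPMap.ext rfl fun _ _ _ ↦ map_smul R.orthogonalProjectionOnto _ _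

theorem compression_vadd (M : H →L[𝕜] H) (T : H →ₗ.[𝕜] H) (R : Submodule 𝕜 H)
    [R.HasOrthogonalProjection] :
    compression ((M : H →ₗ[𝕜] H) +ᵥ T) R =
      ((R.orthogonalProjectionOnto ∘L M ∘L R.subtypeL : R →L[𝕜] R) : R →ₗ[𝕜] R) +ᵥ
        compression T R :=
  LinearPMap.ext rfl fun _ _ _ ↦ map_add R.orthogonalProjectionOnto _ _

theorem norm_orthogonalProjectionOnto_comp_comp_subtypeL_le (M : H →L[𝕜] H) (R : Submodule 𝕜 H)
    [R.HasOrthogonalProjection] : ‖R.orthogonalProjectionOnto ∘L M ∘L R.subtypeL‖ ≤ ‖M‖ :=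
  ContinuousLinearMap.opNorm_le_bound _ (norm_nonneg M) fun x ↦
    (R.norm_orthogonalProjectionOnto_apply_le _).trans (M.le_opNorm x)

theorem statement3_general (M : H →L[𝕜] H) (A : H →ₗ.[𝕜] H) (R : Submodule 𝕜 H) [CompleteSpace R]
    {C_R : ℝ} (hA : ∃ J : R →L[𝕜] R, ‖J‖ ≤ C_R ∧ IsBoundedInverse (compression A R) J)
    {ε : 𝕜} (hε₀ : ε ≠ 0) (hε : ‖ε‖ * (2 * C_R * ‖M‖) ≤ 1) :
    ∃ J : R →L[𝕜] R, ‖J‖ ≤ 2 * C_R * ‖ε‖ ∧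
      IsBoundedInverse (compression ((M : H →ₗ[𝕜] H) +ᵥ ε⁻¹ • A) R) J := by
  obtain ⟨J, hJ_norm, hJ⟩ := hA
  let M_R : R →L[𝕜] R := R.orthogonalProjectionOnto ∘L M ∘L R.subtypeL
  have hεJ : ‖ε • J‖ ≤ C_R * ‖ε‖ := by
    rw [norm_smul, mul_comm]
    gcongr
  have h_half : ‖(ε • J) ∘L M_R‖ ≤ 1 / 2 :=
    calc ‖(ε • J) ∘L M_R‖ ≤ ‖ε • J‖ * ‖M_R‖ := ContinuousLinearMap.opNorm_comp_le _ _
      _ ≤ C_R * ‖ε‖ * ‖M‖ := mul_le_mul hεJ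
          (norm_orthogonalProjectionOnto_comp_comp_subtypeL_le M R) (norm_nonneg _)
          ((norm_nonneg _).trans hεJ)
      _ ≤ 1 / 2 := by linarith
  obtain ⟨K, hK_norm, hK⟩ :=
    (hJ.inv_smul hε₀).exists_vadd_of_norm_comp_lt_one M_R (h_half.trans_lt one_half_lt_one)
  refine ⟨K, ?_, by rwa [compression_vadd, compression_smul]⟩
  calc ‖K‖ ≤ (1 - ‖(ε • J) ∘L M_R‖)⁻¹ * ‖ε • J‖ := hK_norm
    _ ≤ (1 - 1 / 2)⁻¹ * (C_R * ‖ε‖) := by gcongr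
    _ = 2 * C_R * ‖ε‖ := by ring

end Compression

/-- Under Hypothesis (H), for every `ε ∈ (0, 1/(2 C_R ‖M‖))` the operator
`B_{ε,R} = ι_R* M ι_R + ε⁻¹ ι_R* A ι_R` with domain `dom(A) ∩ R` is a bijection onto `R`
with bounded inverse of norm at most `2 C_R ε`. -/
theorem statement3
    {H : Type*} [NormedAddCommGroup H] [InnerProductSpace ℂ H] [CompleteSpace H]
    -- `M` is a bounded operator with `Re⟪M x, x⟫ ≥ c ‖x‖²`, `c > 0`
    (M : H →L[ℂ] H) (c : ℝ) (hc : 0 < c)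
    (hM : ∀ x : H, c * ‖x‖ ^ 2 ≤ (inner ℂ (M x) x : ℂ).re)
    -- `A` is densely defined and skew-selfadjoint
    (A : H →ₗ.[ℂ] H) (hA_dense : Dense (A.domain : Set H)) (hA_skew : A.adjoint = -A)
    -- `N` is a closed subspace, `R = Nᗮ`
    (N : Submodule ℂ H) [CompleteSpace N]
    (C_R : ℝ) (hC_R : 0 < C_R)
    -- Hypothesis (H)(a): `N ⊆ dom A` and `A π_N` is bounded
    (hHa_sub : N ≤ A.domain)
    (hHa_bdd : ∃ Ca : ℝ, ∀ x : A.domain, (x : H) ∈ N → ‖A x‖ ≤ Ca * ‖(x : H)‖)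
    -- Hypothesis (H)(b): `π_R A ⊆ A π_R`
    (hHb : ∀ x : A.domain,
      ∃ hx : ((Submodule.orthogonalProjection Nᗮ (x : H) : H)) ∈ A.domain,
        (Submodule.orthogonalProjection Nᗮ (A x) : H)
          = A ⟨(Submodule.orthogonalProjection Nᗮ (x : H) : H), hx⟩)
    -- Hypothesis (H)(c): the compression `ι_R* A ι_R`, with domain `dom(A) ∩ R`, is a
    -- bijection onto `R` with bounded inverse of norm at most `C_R`
    (hHc : ∃ J : Nᗮ →L[ℂ] Nᗮ, ‖J‖ ≤ C_R ∧
      (∀ (x : A.domain) (hx : (x : H) ∈ Nᗮ),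
        J (Submodule.orthogonalProjection Nᗮ (A x)) = ⟨(x : H), hx⟩) ∧
      (∀ y : Nᗮ, ∃ (x : A.domain) (hx : (x : H) ∈ Nᗮ),
        Submodule.orthogonalProjection Nᗮ (A x) = y))
    (ε : ℝ) (hε : ε ∈ Set.Ioo (0 : ℝ) (1 / (2 * C_R * ‖M‖))) :
    ∃ J : Nᗮ →L[ℂ] Nᗮ, ‖J‖ ≤ 2 * C_R * ε ∧
      (∀ (x : A.domain) (hx : (x : H) ∈ Nᗮ),
        J (Submodule.orthogonalProjection Nᗮ (M (x : H)) + ε⁻¹ • Submodule.orthogonalProjection Nᗮ (A x))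
          = ⟨(x : H), hx⟩) ∧
      (∀ y : Nᗮ, ∃ (x : A.domain) (hx : (x : H) ∈ Nᗮ),
        Submodule.orthogonalProjection Nᗮ (M (x : H)) + ε⁻¹ • Submodule.orthogonalProjection Nᗮ (A x) = y) := by
  simp only [← isBoundedInverse_compression_iff] at hHc
  simpa [isBoundedInverse_compression_iff, abs_of_pos hε.1, ← Complex.ofReal_inv] using
    statement3_general M A Nᗮ hHc (ε := (ε : ℂ)) (by exact_mod_cast hε.1.ne')
      (by simpa [abs_of_pos hε.1] using mul_le_of_le_div₀ zero_le_one (by positivity) hε.2.le)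
end

section
/- (Asymptotic equivalence of operator families coinciding on N.) Assume Hypothesis (H), and let M̃ : H → H be another bounded linear operator such that Re⟨M̃ x, x⟩ ≥ c‖x‖² for all x ∈ H and π_N M π_N = π_N M̃ π_N. Then for every ε ∈ (0, min{1/(2 C_R ‖M‖), 1/(2 C_R ‖M̃‖)}), the operators M + ε⁻¹ A and M̃ + ε⁻¹ A (each with domain dom(A)) are boundedly invertible and ‖ (M + ε⁻¹ A)⁻¹ − (M̃ + ε⁻¹ A)⁻¹ ‖ ≤ κ ε, where κ = [2 C_R (1 + ‖M‖/c)² + C_R] + [2 C_R (1 + ‖M̃‖/c)² + C_R]. -/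
/-!
Split `H = N ⊕ R`. Testing `(M + ε⁻¹ A) u = f` with `u` gives `‖u‖ ≤ ‖f‖ / c`, since `A` is
accretive. Hence `A u = ε (f - M u)` is of order `ε`, and because `A` is bounded below on `R`, so is
the `R`-component of `u`. If `u` and `v` solve the equations with `M` and `M̃` for the same
right-hand side, testing their difference with its own `N`-component `d` discards `A` (as `N`
reduces it) and cancels the difference of the `N`-blocks of `M` and `M̃` (as they agree), so `d` is
controlled by the small `R`-components of `u` and `v`.

The estimate is homogeneous: `M + ε⁻¹ A = ε⁻¹ (ε M + A)`, and `‖ε M‖ / (ε c) = ‖M‖ / c`. It is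
therefore enough to prove it without `ε`.
-/

section Inverse

variable {𝕜 E F : Type*} [NontriviallyNormedField 𝕜] [NormedAddCommGroup E] [NormedSpace 𝕜 E]
  [NormedAddCommGroup F] [NormedSpace 𝕜 F]

/-- `B` is the bounded, everywhere defined inverse of the unbounded operator `T`; that it is a
right inverse is encoded as surjectivity of `T`. -/
def IsBoundedInverse_s9 (T : E →ₗ.[𝕜] F) (B : F →L[𝕜] E) : Prop :=
  (∀ x : T.domain, B (T x) = x) ∧ Function.Surjective T

theorem IsBoundedInverse_s9.inv_smul_vadd {M : E →ₗ[𝕜] F} {A : E →ₗ.[𝕜] F} {B : F →L[𝕜] E} {a : 𝕜}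
    (ha : a ≠ 0) (h : IsBoundedInverse_s9 ((a • M) +ᵥ A) B) :
    IsBoundedInverse_s9 (M +ᵥ a⁻¹ • A) (a • B) := by
  have smul_eq (x : A.domain) : a • (M x + a⁻¹ • A x) = a • M x + A x := by
    rw [smul_add, smul_inv_smul₀ ha]
  refine ⟨fun x => ?_, fun y => ?_⟩
  · change a • B (M x + a⁻¹ • A x) = x
    rw [← map_smul, smul_eq]
    exact h.1 x
  · obtain ⟨x, hx⟩ := h.2 (a • y)
    exact ⟨x, smul_right_injective F ha ((smul_eq x).trans hx)⟩

theorem linearPMap_isClosed_neg {A : E →ₗ.[𝕜] F} (hA : A.IsClosed) : (-A).IsClosed := by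
  have hcont : Continuous fun p : E × F => (p.1, -p.2) := by fun_prop
  have hgraph : ((-A).graph : Set (E × F)) = (fun p : E × F => (p.1, -p.2)) ⁻¹' A.graph := by
    ext p
    simp [LinearPMap.mem_graph_iff, neg_eq_iff_eq_neg]
  rw [LinearPMap.IsClosed, hgraph]
  exact hA.preimage hcont

theorem linearPMap_isClosed_vadd (M : E →L[𝕜] F) {A : E →ₗ.[𝕜] F} (hA : A.IsClosed) :
    ((M : E →ₗ[𝕜] F) +ᵥ A).IsClosed := by
  have hcont : Continuous fun p : E × F => (p.1, p.2 - M p.1) := by fun_prop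
  have hgraph : (((M : E →ₗ[𝕜] F) +ᵥ A).graph : Set (E × F))
      = (fun p : E × F => (p.1, p.2 - M p.1)) ⁻¹' A.graph := by
    ext ⟨x, y⟩
    simp only [SetLike.mem_coe, Set.mem_preimage, LinearPMap.mem_graph_iff]
    refine exists_congr fun z => and_congr_right fun hz => ?_
    subst hz
    exact eq_sub_iff_add_eq'.symm
  rw [LinearPMap.IsClosed, hgraph]
  exact hA.preimage hcont

theorem exists_isBoundedInverse_of_isClosed_of_denseRange [CompleteSpace E] [CompleteSpace F]
    {T : E →ₗ.[𝕜] F} (hT : T.IsClosed) {C : ℝ} (hbound : ∀ x : T.domain, ‖(x : E)‖ ≤ C * ‖T x‖)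
    (hdense : DenseRange T) : ∃ B : F →L[𝕜] E, IsBoundedInverse_s9 T B := by
  have : CompleteSpace T.graph := hT.completeSpace_coe
  let S : T.graph →L[𝕜] F := ContinuousLinearMap.snd 𝕜 E F ∘L T.graph.subtypeL
  let graphMk (x : T.domain) : T.graph := ⟨(x, T x), T.mem_graph x⟩
  have graphMk_surjective (p : T.graph) : ∃ x, graphMk x = p := by
    obtain ⟨x, hx, hTx⟩ := (LinearPMap.mem_graph_iff T).1 p.2
    exact ⟨x, Subtype.ext (Prod.ext hx hTx)⟩
  have hanti : AntilipschitzWith (max C 1).toNNReal S := by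
    refine S.antilipschitz_of_bound fun p => ?_
    obtain ⟨x, rfl⟩ := graphMk_surjective p
    rw [Real.coe_toNNReal _ (zero_le_one.trans (le_max_right C 1))]
    refine max_le ((hbound x).trans ?_) (le_mul_of_one_le_left (norm_nonneg _) (le_max_right C 1))
    exact mul_le_mul_of_nonneg_right (le_max_left C 1) (norm_nonneg _)
  have hS_dense : DenseRange S :=
    hdense.mono (Set.range_subset_iff.2 fun x => ⟨graphMk x, rfl⟩)
  have hS_surj : Function.Surjective S := Set.range_eq_univ.1
    ((hanti.isClosed_range S.uniformContinuous).closure_eq.symm.trans hS_dense.closure_range)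
  let e := ContinuousLinearEquiv.ofBijective S (LinearMap.ker_eq_bot.2 hanti.injective)
    (LinearMap.range_eq_top.2 hS_surj)
  refine ⟨(ContinuousLinearMap.fst 𝕜 E F ∘L T.graph.subtypeL) ∘L e.symm, fun x => ?_, fun y => ?_⟩
  · exact congrArg (fun p : T.graph => p.1.1) (e.symm_apply_apply (graphMk x))
  · obtain ⟨p, hp⟩ := hS_surj y
    obtain ⟨x, rfl⟩ := graphMk_surjective p
    exact ⟨x, hp⟩

end Inverse

section Accretive

open RCLike

variable {𝕜 E : Type*} [RCLike 𝕜] [NormedAddCommGroup E] [InnerProductSpace 𝕜 E]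

/-- The bounded operator `M` is strongly accretive with constant `c`: its real part is at
least `c`. -/
def IsStronglyAccretive (M : E →L[𝕜] E) (c : ℝ) : Prop :=
  ∀ x, c * ‖x‖ ^ 2 ≤ re (inner 𝕜 (M x) x)

/-- The unbounded operator `A` is accretive: its real part is nonnegative on its domain. -/
def IsAccretive (A : E →ₗ.[𝕜] E) : Prop :=
  ∀ x : A.domain, 0 ≤ re (inner 𝕜 (A x) (x : E))

/-- Maximal accretive (m-accretive) operators, encoded through their characterization as the closed,
densely defined accretive operators with accretive adjoint. -/
structure IsMaximalAccretive [CompleteSpace E] (A : E →ₗ.[𝕜] E) : Prop where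
  dense_domain : Dense (A.domain : Set E)
  isClosed : A.IsClosed
  isAccretive : IsAccretive A
  isAccretive_adjoint : IsAccretive A.adjoint

/-- The closed subspace `K` reduces the unbounded operator `A`, that is, `π A ⊆ A π` for the
orthogonal projection `π` onto `K`. -/
def IsReducing (K : Submodule 𝕜 E) [K.HasOrthogonalProjection] (A : E →ₗ.[𝕜] E) : Prop :=
  ∀ x : A.domain, ∃ hx : K.starProjection (x : E) ∈ A.domain,
    K.starProjection (A x) = A ⟨K.starProjection (x : E), hx⟩

theorem mul_norm_le_of_mul_sq_norm_le_re_inner {c : ℝ} {x y : E}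
    (h : c * ‖x‖ ^ 2 ≤ re (inner 𝕜 y x)) : c * ‖x‖ ≤ ‖y‖ := by
  rcases (norm_nonneg x).eq_or_lt with hx | hx
  · rw [← hx, mul_zero]
    exact norm_nonneg y
  · refine le_of_mul_le_mul_right ?_ hx
    calc c * ‖x‖ * ‖x‖ = c * ‖x‖ ^ 2 := by ring
      _ ≤ re (inner 𝕜 y x) := h
      _ ≤ ‖y‖ * ‖x‖ := re_inner_le_norm y x

theorem isMaximalAccretive_of_adjoint_eq_neg [CompleteSpace E] {A : E →ₗ.[𝕜] E}
    (hdense : Dense (A.domain : Set E)) (hskew : A.adjoint = -A) : IsMaximalAccretive A := by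
  have re_inner_eq_zero (x : A.domain) : re (inner 𝕜 (A x) (x : E)) = 0 := by
    have hformal := LinearPMap.adjoint_isFormalAdjoint hdense
    rw [hskew] at hformal
    have h := congrArg re (hformal x x)
    rw [LinearPMap.neg_apply, inner_neg_left, map_neg, inner_re_symm (x : E)] at h
    linarith
  refine ⟨hdense, ?_, fun x => (re_inner_eq_zero x).ge, ?_⟩
  · have hadj := LinearPMap.adjoint_isClosed hdense
    rw [hskew] at hadj
    simpa only [neg_neg] using linearPMap_isClosed_neg hadj
  · rw [hskew]
    intro x
    rw [LinearPMap.neg_apply, inner_neg_left, map_neg]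
    exact (neg_eq_zero.2 (re_inner_eq_zero x)).ge

namespace IsStronglyAccretive

variable {M : E →L[𝕜] E} {A : E →ₗ.[𝕜] E} {c : ℝ}

theorem ofReal_smul (hM : IsStronglyAccretive M c) {t : ℝ} (ht : 0 ≤ t) :
    IsStronglyAccretive ((t : 𝕜) • M) (t * c) := by
  intro x
  rw [smul_apply, inner_smul_left, conj_ofReal, re_ofReal_mul, mul_assoc]
  exact mul_le_mul_of_nonneg_left (hM x) ht

theorem mul_norm_le_norm_add (hM : IsStronglyAccretive M c) (hA : IsAccretive A) (x : A.domain) :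
    c * ‖(x : E)‖ ≤ ‖M x + A x‖ := by
  refine mul_norm_le_of_mul_sq_norm_le_re_inner (𝕜 := 𝕜) ?_
  rw [inner_add_left, map_add]
  exact le_add_of_le_of_nonneg (hM x) (hA x)

theorem norm_le_mul_norm_add (hc : 0 < c) (hM : IsStronglyAccretive M c) (hA : IsAccretive A)
    (x : A.domain) : ‖A x‖ ≤ (1 + ‖M‖ / c) * ‖M x + A x‖ := by
  have hx : ‖(x : E)‖ ≤ ‖M x + A x‖ / c := (le_div_iff₀' hc).2 (hM.mul_norm_le_norm_add hA x)
  calc ‖A x‖ = ‖(M x + A x) - M x‖ := by rw [add_sub_cancel_left]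
    _ ≤ ‖M x + A x‖ + ‖M x‖ := norm_sub_le _ _
    _ ≤ ‖M x + A x‖ + ‖M‖ * (‖M x + A x‖ / c) := by grw [M.le_opNorm, hx]
    _ = (1 + ‖M‖ / c) * ‖M x + A x‖ := by ring

theorem denseRange_vadd [CompleteSpace E] (hc : 0 < c) (hM : IsStronglyAccretive M c)
    (hA : IsMaximalAccretive A) : DenseRange ((M : E →ₗ[𝕜] E) +ᵥ A) := by
  let K : Submodule 𝕜 E := LinearMap.range ((M : E →ₗ[𝕜] E) +ᵥ A).toFun
  suffices h : Kᗮ = ⊥ from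
    Submodule.dense_iff_topologicalClosure_eq_top.2
      (Submodule.topologicalClosure_eq_top_iff.2 h)
  refine (Submodule.eq_bot_iff _).2 fun y hy => ?_
  have horth (x : A.domain) : inner 𝕜 (-(M.adjoint y)) (x : E) = inner 𝕜 y (A x) := by
    have h : inner 𝕜 y (M x + A x) = 0 :=
      Submodule.inner_left_of_mem_orthogonal (K := K) ⟨x, rfl⟩ hy
    rw [inner_add_right] at h
    rw [inner_neg_left, ContinuousLinearMap.adjoint_inner_left]
    exact neg_eq_of_add_eq_zero_right h
  have hy_mem : y ∈ A.adjoint.domain := LinearPMap.mem_adjoint_domain_of_exists y ⟨_, horth⟩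
  have hadj : A.adjoint ⟨y, hy_mem⟩ = -(M.adjoint y) :=
    LinearPMap.adjoint_apply_eq hA.dense_domain ⟨y, hy_mem⟩ horth
  have hre : re (inner 𝕜 (M y) y) ≤ 0 := by
    have h := hA.isAccretive_adjoint ⟨y, hy_mem⟩
    rwa [hadj, inner_neg_left, map_neg, ContinuousLinearMap.adjoint_inner_left, inner_re_symm,
      neg_nonneg] at h
  have hy_norm : c * ‖y‖ ≤ ‖(0 : E)‖ := by
    refine mul_norm_le_of_mul_sq_norm_le_re_inner (𝕜 := 𝕜) ?_
    rw [inner_zero_left, map_zero]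
    exact (hM y).trans hre
  rw [norm_zero] at hy_norm
  exact norm_le_zero_iff.1 (nonpos_of_mul_nonpos_right hy_norm hc)

theorem exists_isBoundedInverse_vadd [CompleteSpace E] (hc : 0 < c)
    (hM : IsStronglyAccretive M c) (hA : IsMaximalAccretive A) :
    ∃ B : E →L[𝕜] E, IsBoundedInverse_s9 ((M : E →ₗ[𝕜] E) +ᵥ A) B :=
  exists_isBoundedInverse_of_isClosed_of_denseRange
    (linearPMap_isClosed_vadd M hA.isClosed) (C := c⁻¹)
    (fun x => (le_inv_mul_iff₀ hc).2 (hM.mul_norm_le_norm_add hA.isAccretive x))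
    (hM.denseRange_vadd hc hA)

end IsStronglyAccretive

theorem norm_le_mul_norm_of_compression_leftInverse {K : Submodule 𝕜 E}
    [K.HasOrthogonalProjection] {A : E →ₗ.[𝕜] E} {C : ℝ} {J : K →L[𝕜] K} (hJ : ‖J‖ ≤ C)
    (hleft : ∀ (x : A.domain) (hx : (x : E) ∈ K),
      J (K.orthogonalProjectionOnto (A x)) = ⟨(x : E), hx⟩)
    (x : A.domain) (hx : (x : E) ∈ K) : ‖(x : E)‖ ≤ C * ‖A x‖ :=
  calc ‖(x : E)‖ = ‖J (K.orthogonalProjectionOnto (A x))‖ := (congrArg norm (hleft x hx)).symm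
    _ ≤ C * ‖A x‖ := J.le_of_opNorm_le_of_le hJ (K.norm_orthogonalProjectionOnto_apply_le _)

section Reducing

variable {M M' : E →L[𝕜] E} {A : E →ₗ.[𝕜] E} {c C : ℝ}
variable {N : Submodule 𝕜 E} [N.HasOrthogonalProjection]

theorem IsReducing.of_orthogonal (h : IsReducing Nᗮ A) : IsReducing N A := by
  intro x
  obtain ⟨hx, hAx⟩ := h x
  have hproj : N.starProjection (x : E) = x - Nᗮ.starProjection (x : E) := by
    rw [Submodule.starProjection_orthogonal_val, sub_sub_cancel]
  have hmem : N.starProjection (x : E) ∈ A.domain := hproj ▸ A.domain.sub_mem x.2 hx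
  refine ⟨hmem, ?_⟩
  calc N.starProjection (A x) = A x - Nᗮ.starProjection (A x) := by
        rw [Submodule.starProjection_orthogonal_val, sub_sub_cancel]
    _ = A (x - ⟨_, hx⟩) := by rw [hAx, A.map_sub]
    _ = A ⟨N.starProjection (x : E), hmem⟩ := congrArg A (Subtype.ext hproj.symm)

theorem IsReducing.re_inner_starProjection_nonneg (h : IsReducing N A) (hA : IsAccretive A)
    (x : A.domain) : 0 ≤ re (inner 𝕜 (A x) (N.starProjection (x : E))) := by
  obtain ⟨hx, hAx⟩ := h x
  have hproj : inner 𝕜 (A x) (N.starProjection (x : E))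
      = inner 𝕜 (N.starProjection (A x)) (N.starProjection (x : E)) := by
    rw [Submodule.inner_starProjection_left_eq_right,
      Submodule.starProjection_eq_self_iff.2 (N.starProjection_apply_mem _)]
  rw [hproj, hAx]
  exact hA ⟨_, hx⟩

theorem IsReducing.norm_starProjection_le (h : IsReducing N A) (hC : 0 ≤ C)
    (hbound : ∀ x : A.domain, (x : E) ∈ N → ‖(x : E)‖ ≤ C * ‖A x‖) (x : A.domain) :
    ‖N.starProjection (x : E)‖ ≤ C * ‖A x‖ := by
  obtain ⟨hx, hAx⟩ := h x
  calc ‖N.starProjection (x : E)‖ ≤ C * ‖A ⟨_, hx⟩‖ := hbound ⟨_, hx⟩ (N.starProjection_apply_mem _)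
    _ = C * ‖N.starProjection (A x)‖ := by rw [hAx]
    _ ≤ C * ‖A x‖ := by grw [N.norm_starProjection_apply_le]

theorem inner_apply_eq_of_compression_eq
    (h : N.starProjection ∘L M ∘L N.starProjection = N.starProjection ∘L M' ∘L N.starProjection)
    {x y : E} (hx : x ∈ N) (hy : y ∈ N) : inner 𝕜 (M x) y = inner 𝕜 (M' x) y := by
  have hx' : N.starProjection (M x) = N.starProjection (M' x) := by
    simpa only [ContinuousLinearMap.comp_apply, Submodule.starProjection_eq_self_iff.2 hx]
      using DFunLike.congr_fun h x
  rw [← Submodule.starProjection_eq_self_iff.2 hy, ← Submodule.inner_starProjection_left_eq_right,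
    hx', Submodule.inner_starProjection_left_eq_right]

variable {u v : A.domain}

theorem mul_norm_starProjection_sub_le (hM : IsStronglyAccretive M c) (hA : IsAccretive A)
    (hN : IsReducing N A)
    (h : N.starProjection ∘L M ∘L N.starProjection = N.starProjection ∘L M' ∘L N.starProjection)
    (huv : M u + A u = M' v + A v) :
    c * ‖N.starProjection ((u : E) - v)‖
      ≤ ‖M‖ * ‖Nᗮ.starProjection (u : E)‖ + ‖M'‖ * ‖Nᗮ.starProjection (v : E)‖ := by
  set d : E := N.starProjection ((u : E) - v) with hd
  set r : E := Nᗮ.starProjection (u : E)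
  set s : E := Nᗮ.starProjection (v : E)
  set m : E := N.starProjection (v : E)
  have hd_mem : d ∈ N := N.starProjection_apply_mem _
  have hu : (u : E) = d + m + r := by
    rw [hd, map_sub, sub_add_cancel, N.starProjection_add_starProjection_orthogonal]
  have hv : (v : E) = m + s := (N.starProjection_add_starProjection_orthogonal _).symm
  have hdiff : M d + A (u - v) = (M' s - M r) + (M' m - M m) := by
    rw [hu, hv, map_add, map_add, map_add] at huv
    rw [A.map_sub]
    linear_combination (norm := module) huv
  have hm : inner 𝕜 (M' m - M m) d = 0 := by
    rw [inner_sub_left, sub_eq_zero]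
    exact (inner_apply_eq_of_compression_eq h (N.starProjection_apply_mem _) hd_mem).symm
  have htest : c * ‖d‖ ^ 2 ≤ re (inner 𝕜 (M' s - M r) d) :=
    calc c * ‖d‖ ^ 2 ≤ re (inner 𝕜 (M d) d) + re (inner 𝕜 (A (u - v)) d) :=
          le_add_of_le_of_nonneg (hM d) (hN.re_inner_starProjection_nonneg hA (u - v))
      _ = re (inner 𝕜 (M' s - M r) d) := by
          rw [← map_add, ← inner_add_left, hdiff, inner_add_left, hm, add_zero]
  calc c * ‖d‖ ≤ ‖M' s - M r‖ := mul_norm_le_of_mul_sq_norm_le_re_inner htest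
    _ ≤ ‖M' s‖ + ‖M r‖ := norm_sub_le _ _
    _ ≤ ‖M'‖ * ‖s‖ + ‖M‖ * ‖r‖ := add_le_add (M'.le_opNorm s) (M.le_opNorm r)
    _ = ‖M‖ * ‖r‖ + ‖M'‖ * ‖s‖ := add_comm _ _

theorem norm_sub_le_mul_norm_starProjection_orthogonal (hc : 0 < c)
    (hM : IsStronglyAccretive M c) (hA : IsAccretive A) (hN : IsReducing N A)
    (h : N.starProjection ∘L M ∘L N.starProjection = N.starProjection ∘L M' ∘L N.starProjection)
    (huv : M u + A u = M' v + A v) :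
    ‖(u : E) - v‖ ≤ (1 + ‖M‖ / c) * ‖Nᗮ.starProjection (u : E)‖
      + (1 + ‖M'‖ / c) * ‖Nᗮ.starProjection (v : E)‖ := by
  have hd := (le_div_iff₀' hc).2 (mul_norm_starProjection_sub_le hM hA hN h huv)
  calc ‖(u : E) - v‖
      = ‖N.starProjection ((u : E) - v) + Nᗮ.starProjection ((u : E) - v)‖ := by
        rw [N.starProjection_add_starProjection_orthogonal]
    _ ≤ ‖N.starProjection ((u : E) - v)‖
        + ‖Nᗮ.starProjection (u : E) - Nᗮ.starProjection (v : E)‖ :=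
        (norm_add_le _ _).trans_eq (by rw [map_sub Nᗮ.starProjection])
    _ ≤ (‖M‖ * ‖Nᗮ.starProjection (u : E)‖ + ‖M'‖ * ‖Nᗮ.starProjection (v : E)‖) / c
        + (‖Nᗮ.starProjection (u : E)‖ + ‖Nᗮ.starProjection (v : E)‖) :=
        add_le_add hd (norm_sub_le _ _)
    _ = _ := by ring

theorem IsBoundedInverse_s9.norm_sub_le {B B' : E →L[𝕜] E}
    (hB : IsBoundedInverse_s9 ((M : E →ₗ[𝕜] E) +ᵥ A) B)
    (hB' : IsBoundedInverse_s9 ((M' : E →ₗ[𝕜] E) +ᵥ A) B') (hc : 0 < c)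
    (hM : IsStronglyAccretive M c) (hM' : IsStronglyAccretive M' c) (hA : IsAccretive A)
    (hN : IsReducing Nᗮ A) (hC : 0 ≤ C)
    (hbound : ∀ x : A.domain, (x : E) ∈ Nᗮ → ‖(x : E)‖ ≤ C * ‖A x‖)
    (h : N.starProjection ∘L M ∘L N.starProjection = N.starProjection ∘L M' ∘L N.starProjection) :
    ‖B - B'‖ ≤ C * (1 + ‖M‖ / c) ^ 2 + C * (1 + ‖M'‖ / c) ^ 2 := by
  refine ContinuousLinearMap.opNorm_le_bound _ (by positivity) fun f => ?_
  obtain ⟨u, hu : M u + A u = f⟩ := hB.2 f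
  obtain ⟨v, hv : M' v + A v = f⟩ := hB'.2 f
  have hBu : B f = u := hu ▸ hB.1 u
  have hBv : B' f = v := hv ▸ hB'.1 v
  have hAu : ‖A u‖ ≤ (1 + ‖M‖ / c) * ‖f‖ := hu ▸ hM.norm_le_mul_norm_add hc hA u
  have hAv : ‖A v‖ ≤ (1 + ‖M'‖ / c) * ‖f‖ := hv ▸ hM'.norm_le_mul_norm_add hc hA v
  calc ‖(B - B') f‖ = ‖(u : E) - v‖ := by rw [sub_apply, hBu, hBv]
    _ ≤ (1 + ‖M‖ / c) * ‖Nᗮ.starProjection (u : E)‖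
        + (1 + ‖M'‖ / c) * ‖Nᗮ.starProjection (v : E)‖ :=
      norm_sub_le_mul_norm_starProjection_orthogonal (A := A) hc hM hA hN.of_orthogonal h
        (hu.trans hv.symm)
    _ ≤ (1 + ‖M‖ / c) * (C * ((1 + ‖M‖ / c) * ‖f‖))
        + (1 + ‖M'‖ / c) * (C * ((1 + ‖M'‖ / c) * ‖f‖)) := by
      grw [hN.norm_starProjection_le hC hbound u, hN.norm_starProjection_le hC hbound v, hAu, hAv]
    _ = (C * (1 + ‖M‖ / c) ^ 2 + C * (1 + ‖M'‖ / c) ^ 2) * ‖f‖ := by ring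

end Reducing

end Accretive

theorem statement9_general {𝕜 H : Type*} [RCLike 𝕜] [NormedAddCommGroup H]
    [InnerProductSpace 𝕜 H] [CompleteSpace H] {M M' : H →L[𝕜] H} {c : ℝ} (hc : 0 < c)
    (hM : IsStronglyAccretive M c) (hM' : IsStronglyAccretive M' c)
    {A : H →ₗ.[𝕜] H} (hA : IsMaximalAccretive A)
    {N : Submodule 𝕜 H} [N.HasOrthogonalProjection] (hN : IsReducing Nᗮ A)
    {C : ℝ} (hC : 0 ≤ C) (hbound : ∀ x : A.domain, (x : H) ∈ Nᗮ → ‖(x : H)‖ ≤ C * ‖A x‖)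
    (h : N.starProjection ∘L M ∘L N.starProjection = N.starProjection ∘L M' ∘L N.starProjection)
    {ε : ℝ} (hε : 0 < ε) :
    ∃ B B' : H →L[𝕜] H,
      IsBoundedInverse_s9 ((M : H →ₗ[𝕜] H) +ᵥ ((ε⁻¹ : ℝ) : 𝕜) • A) B ∧
      IsBoundedInverse_s9 ((M' : H →ₗ[𝕜] H) +ᵥ ((ε⁻¹ : ℝ) : 𝕜) • A) B' ∧
      ‖B - B'‖ ≤ (C * (1 + ‖M‖ / c) ^ 2 + C * (1 + ‖M'‖ / c) ^ 2) * ε := by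
  have hε𝕜 : (ε : 𝕜) ≠ 0 := RCLike.ofReal_ne_zero.2 hε.ne'
  have hεc : 0 < ε * c := mul_pos hε hc
  have hεM := hM.ofReal_smul hε.le
  have hεM' := hM'.ofReal_smul hε.le
  have norm_div (L : H →L[𝕜] H) : ‖(ε : 𝕜) • L‖ / (ε * c) = ‖L‖ / c := by
    rw [norm_smul, RCLike.norm_of_nonneg hε.le, mul_div_mul_left _ _ hε.ne']
  obtain ⟨B, hB⟩ := hεM.exists_isBoundedInverse_vadd hεc hA
  obtain ⟨B', hB'⟩ := hεM'.exists_isBoundedInverse_vadd hεc hA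
  have hdiff := hB.norm_sub_le hB' hεc hεM hεM' hA.isAccretive hN hC hbound <| by
    simp only [ContinuousLinearMap.smul_comp, ContinuousLinearMap.comp_smul, h]
  rw [norm_div, norm_div] at hdiff
  rw [RCLike.ofReal_inv]
  refine ⟨(ε : 𝕜) • B, (ε : 𝕜) • B', hB.inv_smul_vadd hε𝕜, hB'.inv_smul_vadd hε𝕜, ?_⟩
  rw [← smul_sub, norm_smul, RCLike.norm_of_nonneg hε.le, mul_comm]
  exact mul_le_mul_of_nonneg_right hdiff hε.le

/-- **Asymptotic equivalence of operator families coinciding on N.**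
Under Hypothesis (H), if `M̃` is another bounded operator with `Re⟪M̃ x, x⟫ ≥ c‖x‖²` and
`π_N M π_N = π_N M̃ π_N`, then for `ε ∈ (0, min{1/(2 C_R ‖M‖), 1/(2 C_R ‖M̃‖)})` the operators
`M + ε⁻¹ A` and `M̃ + ε⁻¹ A` are boundedly invertible and
`‖(M + ε⁻¹ A)⁻¹ − (M̃ + ε⁻¹ A)⁻¹‖ ≤ κ ε` with
`κ = [2 C_R (1 + ‖M‖/c)² + C_R] + [2 C_R (1 + ‖M̃‖/c)² + C_R]`. -/
theorem statement9
    {H : Type*} [NormedAddCommGroup H] [InnerProductSpace ℂ H] [CompleteSpace H]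
    -- `M` is a bounded operator with `Re⟪M x, x⟫ ≥ c ‖x‖²`, `c > 0`
    (M : H →L[ℂ] H) (c : ℝ) (hc : 0 < c)
    (hM : ∀ x : H, c * ‖x‖ ^ 2 ≤ (inner ℂ (M x) x : ℂ).re)
    -- `A` is densely defined and skew-selfadjoint
    (A : H →ₗ.[ℂ] H) (hA_dense : Dense (A.domain : Set H)) (hA_skew : A.adjoint = -A)
    -- `N` is a closed subspace, `R = Nᗮ`
    (N : Submodule ℂ H) [CompleteSpace N]
    (C_R : ℝ) (hC_R : 0 < C_R)
    -- Hypothesis (H)(a): `N ⊆ dom A` and `A π_N` is bounded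
    (hHa_sub : N ≤ A.domain)
    (hHa_bdd : ∃ Ca : ℝ, ∀ x : A.domain, (x : H) ∈ N → ‖A x‖ ≤ Ca * ‖(x : H)‖)
    -- Hypothesis (H)(b): `π_R A ⊆ A π_R`
    (hHb : ∀ x : A.domain,
      ∃ hx : ((Submodule.orthogonalProjection Nᗮ (x : H) : H)) ∈ A.domain,
        (Submodule.orthogonalProjection Nᗮ (A x) : H)
          = A ⟨(Submodule.orthogonalProjection Nᗮ (x : H) : H), hx⟩)
    -- Hypothesis (H)(c): the compression `ι_R* A ι_R`, with domain `dom(A) ∩ R`, is a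
    -- bijection onto `R` with bounded inverse of norm at most `C_R`
    (hHc : ∃ J : Nᗮ →L[ℂ] Nᗮ, ‖J‖ ≤ C_R ∧
      (∀ (x : A.domain) (hx : (x : H) ∈ Nᗮ),
        J (Submodule.orthogonalProjection Nᗮ (A x)) = ⟨(x : H), hx⟩) ∧
      (∀ y : Nᗮ, ∃ (x : A.domain) (hx : (x : H) ∈ Nᗮ),
        Submodule.orthogonalProjection Nᗮ (A x) = y))
    (Mt : H →L[ℂ] H)
    (hMt : ∀ x : H, c * ‖x‖ ^ 2 ≤ (inner ℂ (Mt x) x : ℂ).re)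
    (hcoincide : ∀ x : H,
      (Submodule.orthogonalProjection N (M ((Submodule.orthogonalProjection N x : H))) : H)
        = (Submodule.orthogonalProjection N (Mt ((Submodule.orthogonalProjection N x : H))) : H))
    (ε : ℝ)
    (hε : ε ∈ Set.Ioo (0 : ℝ) (min (1 / (2 * C_R * ‖M‖)) (1 / (2 * C_R * ‖Mt‖)))) :
    ∃ (Binv Btinv : H →L[ℂ] H),
      -- `Binv` is the bounded inverse of `M + ε⁻¹ A`
      (∀ x : A.domain, Binv (M (x : H) + ε⁻¹ • A x) = x) ∧
      (∀ y : H, ∃ x : A.domain, M (x : H) + ε⁻¹ • A x = y) ∧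
      -- `Btinv` is the bounded inverse of `M̃ + ε⁻¹ A`
      (∀ x : A.domain, Btinv (Mt (x : H) + ε⁻¹ • A x) = x) ∧
      (∀ y : H, ∃ x : A.domain, Mt (x : H) + ε⁻¹ • A x = y) ∧
      ‖Binv - Btinv‖
        ≤ ((2 * C_R * (1 + ‖M‖ / c) ^ 2 + C_R)
            + (2 * C_R * (1 + ‖Mt‖ / c) ^ 2 + C_R)) * ε := by
  obtain ⟨J, hJ, hJ_left, -⟩ := hHc
  obtain ⟨B, Bt, hB, hBt, hdiff⟩ := statement9_general (M := M) (M' := Mt) hc hM hMt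
    (isMaximalAccretive_of_adjoint_eq_neg hA_dense hA_skew) hHb hC_R.le
    (norm_le_mul_norm_of_compression_leftInverse hJ hJ_left)
    (ContinuousLinearMap.ext hcoincide) hε.1
  have hconst (a : ℝ) : C_R * a ^ 2 ≤ 2 * C_R * a ^ 2 + C_R := by
    linarith [mul_nonneg hC_R.le (sq_nonneg a)]
  exact ⟨B, Bt, hB.1, hB.2, hBt.1, hBt.2,
    hdiff.trans (mul_le_mul_of_nonneg_right (add_le_add (hconst _) (hconst _)) hε.1.le)⟩
end
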